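/- Fix an integer p ≥ 1 and a permutation σ ∈ S_p whose cycles (fixed points included) have lengths d_1,…,d_r. Then lim_{n→∞} n^{p+|σ|} · Wg(n,σ) = Π_{i=1}^{r} (−1)^{d_i−1} c_{d_i−1}, where c_i = (2i)!/((i+1)!·i!) is the i-th Catalan number; in particular Wg(n,σ) = n^{−(p+|σ|)}(Mob(σ) + O(n^{−2})) where Mob(σ) denotes this product of signed Catalan numbers. -/

import Mathlib

open Matrix Filter Asymptotics

noncomputable section

/-- number of cycles of a permutation, fixed points included -/
def ncycles {α : Type*} [Fintype α] [DecidableEq α] (σ : Equiv.Perm α) : ℕ :=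
  Fintype.card α - σ.cycleType.sum + σ.cycleType.card

/-- length of a permutation: `|σ| = p − #σ`, the minimal number of transpositions -/
def permLength {α : Type*} [Fintype α] [DecidableEq α] (σ : Equiv.Perm α) : ℕ :=
  σ.cycleType.sum - σ.cycleType.card

/-- the Moebius function `Mob(σ)`: product over the cycles of `σ`, of lengths
`d_1,…,d_r`, of the signed Catalan numbers `(−1)^{d_i−1} c_{d_i−1}`
(fixed points contribute a factor `1`). -/
def Mob {α : Type*} [Fintype α] [DecidableEq α] (σ : Equiv.Perm α) : ℝ :=
  (σ.cycleType.map fun d => (-1 : ℝ) ^ (d - 1) * (catalan (d - 1))).prod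

/-!
Write `|σ|` for the length and let `f σ = n ^ (p + |σ|) * Wg(n, σ)`. Since `#σ = p - |σ|`, the
defining relation of `Wg` becomes `∑ τ, n ^ (|ρ| - |τ| - |ρ τ⁻¹|) * f τ = δ_{ρ, 1}`. By the triangle
inequality and the parity of `|·|`, each exponent is either `0`, which happens exactly when `τ` lies
on a geodesic from `1` to `ρ`, or at most `-2`. So `f` solves an `O(n⁻²)` perturbation of the linear
system `∑ τ ≤ ρ, v τ = δ_{ρ, 1}` for the absolute order, which is unitriangular for `|·|`.

It remains to see that `Mob` solves the unperturbed system. If `ρ x ≠ x`, every `τ ≤ ρ` is uniquely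
`(x i) π` with `π ≤ ρ` such that `ρ π⁻¹` fixes `x`, and `i` in the cycle of `π` through `x`.
Multiplying `π` by these transpositions splits that cycle in all possible ways, so the sum of `Mob`
over each such family vanishes by the Catalan recurrence.
-/

section CycleSplitting

open Equiv Equiv.Perm

variable {α : Type*} [DecidableEq α]

lemma mul_inv_swap_mul (ρ τ : Perm α) (x i : α) :
    ρ * (swap x i * τ)⁻¹ = ρ * τ⁻¹ * swap x i := by
  rw [_root_.mul_inv_rev, swap_inv, mul_assoc]

lemma swap_mul_formPerm_append {x i : α} {l₁ l₂ : List α} (h : (x :: l₁ ++ i :: l₂).Nodup) :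
    swap x i * (x :: l₁ ++ i :: l₂).formPerm = (x :: l₁).formPerm * (i :: l₂).formPerm := by
  induction l₁ generalizing x with
  | nil => simp
  | cons y l ih =>
    have swap_comm_rel : swap x i * swap x y = swap x y * swap y i := by
      rw [swap_mul_eq_mul_swap, swap_inv, swap_apply_left,
        swap_apply_of_ne_of_ne (by grind) (by grind)]
    simp only [List.cons_append, List.formPerm_cons_cons] at ih ⊢
    rw [← mul_assoc, swap_comm_rel, mul_assoc, ih h.of_cons, mul_assoc]

lemma disjoint_formPerm {l₁ l₂ : List α} (h : l₁.Disjoint l₂) :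
    l₁.formPerm.Disjoint l₂.formPerm := fun y ↦ by
  by_cases hy : y ∈ l₁
  · exact .inr (List.formPerm_apply_of_notMem (h hy))
  · exact .inl (List.formPerm_apply_of_notMem hy)

lemma sameCycle_swap_mul_of_not_sameCycle [Finite α] {π : Perm α} {x i : α}
    (h : ¬ π.SameCycle x i) : (swap x i * π).SameCycle x i := by
  -- Otherwise the orbit of `x` under `swap x i * π` contains its whole `π`-orbit, in particular
  -- `π⁻¹ x`, which `swap x i * π` sends to `i`.
  by_contra hc
  have orbit_subset (n : ℕ) : (swap x i * π).SameCycle x ((π ^ n) x) := by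
    induction n with
    | zero => exact .rfl
    | succ n ih =>
      have hne_i : (π ^ (n + 1)) x ≠ i := fun hi ↦ h (hi ▸ sameCycle_pow_right.mpr .rfl)
      have step : (swap x i * π) ((π ^ n) x) = swap x i ((π ^ (n + 1)) x) := by
        rw [pow_succ', Perm.mul_apply, Perm.mul_apply]
      have hx_step := step ▸ sameCycle_apply_right.mpr ih
      have hne_x : (π ^ (n + 1)) x ≠ x := fun hx ↦ hc <| by
        rwa [hx, swap_apply_left] at hx_step
      rwa [swap_apply_of_ne_of_ne hne_x hne_i] at hx_step
  obtain ⟨n, hn⟩ := (sameCycle_symm_apply_right.mpr (SameCycle.refl π x)).exists_nat_pow_eq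
  have hlast := sameCycle_apply_right.mpr (hn ▸ orbit_subset n)
  rw [Perm.mul_apply, apply_symm_apply, swap_apply_left] at hlast
  exact hc hlast

variable [Fintype α]

lemma cycleType_formPerm_eq_filter {l : List α} (hl : l.Nodup) :
    l.formPerm.cycleType = ({l.length} : Multiset ℕ).filter (1 < ·) := by
  by_cases hlen : 1 < l.length
  · have hne (x : α) : l ≠ [x] := by rintro rfl; simp at hlen
    rw [(List.isCycle_formPerm hl hlen).cycleType, List.support_formPerm_of_nodup l hl hne,
      List.toFinset_card_of_nodup hl, Multiset.filter_singleton, if_pos hlen]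
  · rw [Multiset.filter_singleton, if_neg hlen, Multiset.empty_eq_zero, cycleType_eq_zero,
      List.formPerm_eq_one_iff l hl]
    exact not_lt.mp hlen

lemma cycleType_swap_mul_formPerm_append {x i : α} {l₁ l₂ : List α}
    (h : (x :: l₁ ++ i :: l₂).Nodup) :
    (swap x i * (x :: l₁ ++ i :: l₂).formPerm).cycleType =
      ({l₁.length + 1, l₂.length + 1} : Multiset ℕ).filter (1 < ·) := by
  have hdisj := disjoint_formPerm (List.disjoint_of_nodup_append h)
  rw [swap_mul_formPerm_append h, hdisj.cycleType_mul,
    cycleType_formPerm_eq_filter h.of_append_left,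
    cycleType_formPerm_eq_filter h.of_append_right, ← Multiset.filter_add]
  rfl

lemma exists_toList_eq_append {π : Perm α} {x : α} {k : ℕ} (hk₀ : 0 < k)
    (hk : k < (π.cycleOf x).support.card) :
    ∃ l₁ l₂, π.toList x = x :: l₁ ++ (π ^ k) x :: l₂ ∧ l₁.length + 1 = k ∧
      l₂.length + 1 = (π.cycleOf x).support.card - k := by
  obtain ⟨a, rfl⟩ := Nat.exists_eq_add_of_lt hk₀
  obtain ⟨b, hb⟩ := Nat.exists_eq_add_of_lt hk
  refine ⟨List.iterate π (π x) a, List.iterate π (π ((π ^ (0 + a + 1)) x)) b, ?_, by simp, ?_⟩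
  · rw [toList, hb, add_assoc _ b, List.iterate_add, iterate_eq_pow, zero_add]
    rfl
  · rw [List.length_iterate, hb]
    lia

lemma disjoint_cycleOf_mul_inv (π : Perm α) (x : α) :
    (π.cycleOf x).Disjoint (π * (π.cycleOf x)⁻¹) := by
  by_cases hx : π x = x
  · rw [(cycleOf_eq_one_iff π).mpr hx]
    exact disjoint_one_left _
  · refine (disjoint_mul_inv_of_mem_cycleFactorsFinset ?_).symm
    exact cycleOf_mem_cycleFactorsFinset_iff.mpr (mem_support.mpr hx)

lemma cycleOf_mul_mul_inv (π : Perm α) (x : α) :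
    π.cycleOf x * (π * (π.cycleOf x)⁻¹) = π := by
  rw [(disjoint_cycleOf_mul_inv π x).commute.eq, inv_mul_cancel_right]

lemma cycleType_eq_cons_cycleType_mul_inv {π : Perm α} {x : α} (hx : π x ≠ x) :
    π.cycleType = (π.cycleOf x).support.card ::ₘ (π * (π.cycleOf x)⁻¹).cycleType := by
  conv_lhs => rw [← cycleOf_mul_mul_inv π x, (disjoint_cycleOf_mul_inv π x).cycleType_mul,
    (isCycle_cycleOf π hx).cycleType]
  rfl

lemma disjoint_swap_mul_inv_cycleOf {π : Perm α} {x i : α} (hx : π x ≠ x)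
    (hi : π.SameCycle x i) : (swap x i).Disjoint (π * (π.cycleOf x)⁻¹) := by
  have fixed_of_sameCycle {j : α} (hj : π.SameCycle x j) : (π * (π.cycleOf x)⁻¹) j = j :=
    (disjoint_cycleOf_mul_inv π x j).resolve_left <|
      mem_support.mp (mem_support_cycleOf_iff.mpr ⟨hj, mem_support.mpr hx⟩)
  intro y
  by_cases hy : y = x ∨ y = i
  · rcases hy with rfl | rfl
    exacts [.inr (fixed_of_sameCycle .rfl), .inr (fixed_of_sameCycle hi)]
  · rw [not_or] at hy
    exact .inl (swap_apply_of_ne_of_ne hy.1 hy.2)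

lemma cycleType_swap_pow_mul_cycleOf {π : Perm α} {x : α} {k : ℕ} (hk₀ : 0 < k)
    (hk : k < (π.cycleOf x).support.card) :
    (swap x ((π ^ k) x) * π.cycleOf x).cycleType =
      ({k, (π.cycleOf x).support.card - k} : Multiset ℕ).filter (1 < ·) := by
  obtain ⟨l₁, l₂, hl, hl₁, hl₂⟩ := exists_toList_eq_append hk₀ hk
  rw [← hl₂, ← hl₁, ← cycleType_swap_mul_formPerm_append (hl ▸ nodup_toList π x), ← hl,
    formPerm_toList, hl₁]

-- For `k = 0` the swap is trivial, and the filter discards the part `0`.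
lemma cycleType_swap_pow_mul {π : Perm α} {x : α} {k : ℕ} (hk : k < (π.cycleOf x).support.card) :
    (swap x ((π ^ k) x) * π).cycleType =
      ({k, (π.cycleOf x).support.card - k} : Multiset ℕ).filter (1 < ·) +
        (π * (π.cycleOf x)⁻¹).cycleType := by
  have hx : π x ≠ x := fun hx ↦ by simp [(cycleOf_eq_one_iff π).mpr hx] at hk
  rcases Nat.eq_zero_or_pos k with rfl | hk₀
  · have hcard : 1 < (π.cycleOf x).support.card := (isCycle_cycleOf π hx).two_le_card_support
    rw [pow_zero, one_apply, swap_self, ← Perm.one_def, one_mul,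
      cycleType_eq_cons_cycleType_mul_inv hx]
    simp [Multiset.filter_singleton, hcard]
  · have hdisj : (swap x ((π ^ k) x) * π.cycleOf x).Disjoint (π * (π.cycleOf x)⁻¹) :=
      (disjoint_swap_mul_inv_cycleOf hx (sameCycle_pow_right.mpr .rfl)).mul_left
        (disjoint_cycleOf_mul_inv π x)
    have hfactor : swap x ((π ^ k) x) * π =
        swap x ((π ^ k) x) * π.cycleOf x * (π * (π.cycleOf x)⁻¹) := by
      rw [mul_assoc, cycleOf_mul_mul_inv]
    rw [hfactor, hdisj.cycleType_mul, cycleType_swap_pow_mul_cycleOf hk₀ hk]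

lemma injOn_pow_apply (π : Perm α) (x : α) :
    Set.InjOn (fun k ↦ (π ^ k) x) (Set.Iio (π.cycleOf x).support.card) := by
  intro a ha b hb hab
  rw [Set.mem_Iio, ← length_toList] at ha hb
  simp only [← getElem_toList π x _ ha, ← getElem_toList π x _ hb] at hab
  exact (nodup_toList π x).getElem_inj_iff.mp hab

lemma sum_sameCycle_eq_sum_range {M : Type*} [AddCommMonoid M] {π : Perm α} {x : α}
    (hx : π x ≠ x) (g : α → M) :
    ∑ i with π.SameCycle x i, g i =
      ∑ k ∈ Finset.range (π.cycleOf x).support.card, g ((π ^ k) x) := by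
  symm
  refine Finset.sum_nbij (fun k ↦ (π ^ k) x) ?_ ?_ ?_ fun _ _ ↦ rfl
  · exact fun k _ ↦ by simp [SameCycle.rfl]
  · exact (injOn_pow_apply π x).mono fun k hk ↦ Finset.mem_range.mp hk
  · intro i hi
    obtain ⟨k, hk, rfl⟩ :=
      (Finset.mem_filter.mp hi).2.exists_pow_eq_of_mem_support (mem_support.mpr hx)
    exact ⟨k, Finset.mem_coe.mpr (Finset.mem_range.mpr hk), rfl⟩

end CycleSplitting

@[to_additive sum_map_filter_one_lt]
lemma prod_map_filter_one_lt {M : Type*} [CommMonoid M] {f : ℕ → M} (hf : ∀ d ≤ 1, f d = 1)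
    (s : Multiset ℕ) : ((s.filter (1 < ·)).map f).prod = (s.map f).prod := by
  induction s using Multiset.induction with
  | empty => simp
  | cons d s ih =>
    by_cases hd : 1 < d
    · simp [hd, ih]
    · simp [hd, ih, hf d (not_lt.mp hd)]

section PermLength

open Equiv Equiv.Perm

variable {α : Type*} [Fintype α] [DecidableEq α]

lemma permLength_add_card_cycleType (σ : Perm α) :
    permLength σ + σ.cycleType.card = σ.cycleType.sum := by
  refine Nat.sub_add_cancel ?_
  simpa using Multiset.card_nsmul_le_sum fun d hd ↦ (one_lt_of_mem_cycleType (σ := σ) hd).le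

lemma permLength_eq_sum (σ : Perm α) : permLength σ = (σ.cycleType.map (· - 1)).sum := by
  rw [permLength, Multiset.sum_map_tsub _ fun d hd ↦ (one_lt_of_mem_cycleType hd).le]
  simp

lemma ncycles_add_permLength (σ : Perm α) : ncycles σ + permLength σ = Fintype.card α := by
  have hlen := permLength_add_card_cycleType σ
  have hsum := sum_cycleType_le σ
  rw [ncycles]
  lia

lemma permLength_one : permLength (1 : Perm α) = 0 := by simp [permLength]

lemma permLength_inv (σ : Perm α) : permLength σ⁻¹ = permLength σ := by
  simp [permLength, cycleType_inv]

lemma sign_eq_neg_one_pow_permLength (σ : Perm α) : sign σ = (-1) ^ permLength σ := by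
  rw [sign_of_cycleType, ← permLength_add_card_cycleType σ, add_assoc, pow_add,
    (Even.add_self σ.cycleType.card).neg_one_pow, mul_one]

lemma even_permLength_mul_add (σ τ : Perm α) :
    Even (permLength (σ * τ) + (permLength σ + permLength τ)) := by
  have hsign : (-1 : ℤˣ) ^ (permLength (σ * τ) + (permLength σ + permLength τ)) = 1 := by
    rw [pow_add, pow_add, ← sign_eq_neg_one_pow_permLength, ← sign_eq_neg_one_pow_permLength,
      ← sign_eq_neg_one_pow_permLength, Perm.sign_mul, Int.units_mul_self]
  exact (neg_one_pow_eq_one_iff_even (by decide)).mp hsign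

variable {π : Perm α} {x i : α}

lemma permLength_swap_mul_of_sameCycle (hxi : x ≠ i) (h : π.SameCycle x i) :
    permLength (swap x i * π) + 1 = permLength π := by
  have hx : π x ≠ x := fun hx ↦ hxi (h.eq_of_left hx)
  obtain ⟨k, hk, rfl⟩ := h.exists_pow_eq_of_mem_support (mem_support.mpr hx)
  have hk₀ : k ≠ 0 := by rintro rfl; exact hxi rfl
  rw [permLength_eq_sum, permLength_eq_sum, cycleType_swap_pow_mul hk,
    cycleType_eq_cons_cycleType_mul_inv hx, Multiset.map_add, Multiset.sum_add,
    sum_map_filter_one_lt fun d hd ↦ Nat.sub_eq_zero_of_le hd]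
  simp only [Multiset.insert_eq_cons, Multiset.map_cons, Multiset.map_singleton,
    Multiset.sum_cons, Multiset.sum_singleton]
  lia

lemma permLength_swap_mul_of_not_sameCycle (hxi : x ≠ i) (h : ¬ π.SameCycle x i) :
    permLength (swap x i * π) = permLength π + 1 := by
  have hcut := permLength_swap_mul_of_sameCycle hxi (sameCycle_swap_mul_of_not_sameCycle h)
  rwa [swap_mul_self_mul, eq_comm] at hcut

lemma permLength_swap_mul_lt_iff (hxi : x ≠ i) :
    permLength (swap x i * π) < permLength π ↔ π.SameCycle x i := by
  refine ⟨fun hlt ↦ ?_, fun h ↦ ?_⟩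
  · by_contra h
    have hjoin := permLength_swap_mul_of_not_sameCycle hxi h
    lia
  · have hcut := permLength_swap_mul_of_sameCycle hxi h
    lia

lemma permLength_swap_mul_le (π : Perm α) (x i : α) :
    permLength (swap x i * π) ≤ permLength π + 1 := by
  rcases eq_or_ne x i with rfl | hxi
  · simp [swap_self, ← Perm.one_def]
  by_cases h : π.SameCycle x i
  · have hcut := permLength_swap_mul_of_sameCycle hxi h
    lia
  · exact (permLength_swap_mul_of_not_sameCycle hxi h).le

lemma permLength_mul_swap (π : Perm α) (x i : α) :
    permLength (π * swap x i) = permLength (swap x i * π⁻¹) := by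
  rw [← permLength_inv, _root_.mul_inv_rev, swap_inv]

lemma permLength_mul_swap_of_sameCycle (hxi : x ≠ i) (h : π.SameCycle x i) :
    permLength (π * swap x i) + 1 = permLength π := by
  rw [permLength_mul_swap, permLength_swap_mul_of_sameCycle hxi (sameCycle_inv.mpr h),
    permLength_inv]

lemma permLength_mul_swap_of_not_sameCycle (hxi : x ≠ i) (h : ¬ π.SameCycle x i) :
    permLength (π * swap x i) = permLength π + 1 := by
  rw [permLength_mul_swap, permLength_swap_mul_of_not_sameCycle hxi (mt sameCycle_inv.mp h),
    permLength_inv]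

lemma permLength_swap_apply_mul (hx : π x ≠ x) :
    permLength (swap x (π x) * π) + 1 = permLength π :=
  permLength_swap_mul_of_sameCycle hx.symm (sameCycle_apply_right.mpr .rfl)

lemma permLength_pos (hπ : π ≠ 1) : 0 < permLength π := by
  obtain ⟨x, hx⟩ := DFunLike.exists_ne hπ
  rw [← permLength_swap_apply_mul hx]
  exact Nat.succ_pos _

lemma permLength_mul_le (σ τ : Perm α) :
    permLength (σ * τ) ≤ permLength σ + permLength τ := by
  induction hn : permLength σ generalizing σ with
  | zero =>
    obtain rfl : σ = 1 := by
      by_contra hσ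
      exact (permLength_pos hσ).ne' hn
    simp
  | succ n ih =>
    have hσ : σ ≠ 1 := by
      rintro rfl
      simp [permLength_one] at hn
    obtain ⟨x, hx⟩ := DFunLike.exists_ne hσ
    have hsplit : σ * τ = swap x (σ x) * (swap x (σ x) * σ * τ) := by
      rw [mul_assoc _ σ, swap_mul_self_mul]
    have hlen := permLength_swap_apply_mul hx
    calc permLength (σ * τ) ≤ permLength (swap x (σ x) * σ * τ) + 1 :=
          hsplit ▸ permLength_swap_mul_le _ _ _
      _ ≤ n + permLength τ + 1 := Nat.succ_le_succ (ih _ (by lia))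
      _ = n + 1 + permLength τ := by ring

end PermLength

/-- The signed Catalan number `(-1)^(d-1) c_(d-1)` contributed to `Mob` by a cycle of length `d`.
Truncated subtraction gives it the value `1` at `d = 0` as well as at `d = 1`. -/
def signedCatalan (d : ℕ) : ℝ := (-1) ^ (d - 1) * catalan (d - 1)

lemma signedCatalan_of_le_one {d : ℕ} (hd : d ≤ 1) : signedCatalan d = 1 := by
  simp [signedCatalan, Nat.sub_eq_zero_of_le hd]

lemma signedCatalan_succ (n : ℕ) : signedCatalan (n + 1) = (-1) ^ n * catalan n := rfl

-- The term `k = 0` is `signedCatalan d`; the others form the Catalan recurrence with signs.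
lemma sum_signedCatalan_mul_eq_zero {d : ℕ} (hd : 2 ≤ d) :
    ∑ k ∈ Finset.range d, signedCatalan k * signedCatalan (d - k) = 0 := by
  obtain ⟨n, rfl⟩ := Nat.exists_eq_add_of_le' hd
  have hterm : ∀ j ∈ Finset.range (n + 1),
      signedCatalan (j + 1) * signedCatalan (n + 2 - (j + 1)) =
        (-1) ^ n * (catalan j * catalan (n - j)) := fun j hj ↦ by
    have hjn : j ≤ n := Finset.mem_range_succ_iff.mp hj
    rw [show n + 2 - (j + 1) = n - j + 1 by lia, signedCatalan_succ, signedCatalan_succ,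
      ← pow_mul_pow_sub (-1 : ℝ) hjn]
    ring
  have hcatalan : (catalan (n + 1) : ℝ) =
      ∑ j ∈ Finset.range (n + 1), (catalan j * catalan (n - j) : ℝ) := by
    rw [catalan_succ, Finset.sum_range]
    push_cast
    rfl
  rw [Finset.sum_range_succ', Finset.sum_congr rfl hterm, ← Finset.mul_sum, ← hcatalan,
    signedCatalan_of_le_one zero_le_one, tsub_zero, signedCatalan_succ, pow_succ]
  ring

section Mobius

open Equiv Equiv.Perm

variable {α : Type*} [Fintype α] [DecidableEq α]

lemma Mob_eq_prod_signedCatalan (σ : Perm α) : Mob σ = (σ.cycleType.map signedCatalan).prod := rfl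

lemma Mob_one : Mob (1 : Perm α) = 1 := by simp [Mob]

lemma Mob_swap_pow_mul {π : Perm α} {x : α} {k : ℕ} (hk : k < (π.cycleOf x).support.card) :
    Mob (swap x ((π ^ k) x) * π) =
      signedCatalan k * signedCatalan ((π.cycleOf x).support.card - k) *
        Mob (π * (π.cycleOf x)⁻¹) := by
  rw [Mob_eq_prod_signedCatalan, cycleType_swap_pow_mul hk, Multiset.map_add, Multiset.prod_add,
    prod_map_filter_one_lt fun d ↦ signedCatalan_of_le_one, Mob_eq_prod_signedCatalan]
  simp

lemma sum_Mob_swap_mul_eq_zero {π : Perm α} {x : α} (hx : π x ≠ x) :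
    ∑ i with π.SameCycle x i, Mob (swap x i * π) = 0 := by
  have htwo : 2 ≤ (π.cycleOf x).support.card := (isCycle_cycleOf π hx).two_le_card_support
  rw [sum_sameCycle_eq_sum_range hx,
    Finset.sum_congr rfl fun k hk ↦ Mob_swap_pow_mul (Finset.mem_range.mp hk), ← Finset.sum_mul,
    sum_signedCatalan_mul_eq_zero htwo, zero_mul]

/-- The interval `[1, ρ]` of the absolute order on permutations: the `τ` that lie on a geodesic
from `1` to `ρ` for the distance `|ρ * τ⁻¹|`. -/
def absInterval (ρ : Perm α) : Finset (Perm α) :=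
  {τ | permLength τ + permLength (ρ * τ⁻¹) = permLength ρ}

variable {ρ τ π : Perm α} {x i : α}

lemma mem_absInterval :
    τ ∈ absInterval ρ ↔ permLength τ + permLength (ρ * τ⁻¹) = permLength ρ := by
  simp [absInterval]

lemma self_mem_absInterval (ρ : Perm α) : ρ ∈ absInterval ρ := by
  simp [mem_absInterval, permLength_one]

lemma permLength_lt_of_mem_absInterval (hτ : τ ∈ absInterval ρ) (hne : τ ≠ ρ) :
    permLength τ < permLength ρ := by
  have hpos : 0 < permLength (ρ * τ⁻¹) :=
    permLength_pos fun h ↦ hne (mul_inv_eq_one.mp h).symm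
  rw [mem_absInterval] at hτ
  lia

lemma absInterval_one : absInterval (1 : Perm α) = {1} := by
  refine Finset.eq_singleton_iff_unique_mem.mpr ⟨self_mem_absInterval 1, fun τ hτ ↦ ?_⟩
  by_contra hne
  simpa [permLength_one] using permLength_lt_of_mem_absInterval hτ hne

lemma swap_mul_mem_absInterval (hπ : π ∈ absInterval ρ) (hfix : (ρ * π⁻¹) x = x)
    (h : π.SameCycle x i) : swap x i * π ∈ absInterval ρ := by
  rcases eq_or_ne x i with rfl | hxi
  · simpa [swap_self, ← Perm.one_def]
  have hcut := permLength_swap_mul_of_sameCycle hxi h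
  have hjoin := permLength_mul_swap_of_not_sameCycle (π := ρ * π⁻¹) hxi
    fun hc ↦ hxi (hc.eq_of_left hfix)
  rw [mem_absInterval] at hπ ⊢
  rw [mul_inv_swap_mul]
  lia

lemma permLength_swap_mul_of_mem_absInterval (hτ : τ ∈ absInterval ρ) (hi : (ρ * τ⁻¹) i = x)
    (hxi : x ≠ i) : permLength (swap x i * τ) = permLength τ + 1 ∧
      permLength (ρ * τ⁻¹ * swap x i) + 1 = permLength (ρ * τ⁻¹) := by
  have hcut : permLength (ρ * τ⁻¹ * swap x i) + 1 = permLength (ρ * τ⁻¹) :=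
    permLength_mul_swap_of_sameCycle hxi (hi ▸ sameCycle_apply_left.mpr .rfl)
  have hle := permLength_swap_mul_le τ x i
  have htriangle := permLength_mul_le (ρ * τ⁻¹ * swap x i) (swap x i * τ)
  rw [mul_assoc (ρ * τ⁻¹), swap_mul_self_mul, inv_mul_cancel_right] at htriangle
  rw [mem_absInterval] at hτ
  exact ⟨by lia, hcut⟩

lemma swap_mul_mem_absInterval_of_apply_eq (hτ : τ ∈ absInterval ρ) (hi : (ρ * τ⁻¹) i = x) :
    swap x i * τ ∈ absInterval ρ ∧ (swap x i * τ).SameCycle x i := by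
  rcases eq_or_ne x i with rfl | hxi
  · exact ⟨by simpa [swap_self, ← Perm.one_def], .rfl⟩
  obtain ⟨hjoin, hcut⟩ := permLength_swap_mul_of_mem_absInterval hτ hi hxi
  refine ⟨?_, ?_⟩
  · rw [mem_absInterval] at hτ ⊢
    rw [mul_inv_swap_mul]
    lia
  · rw [← permLength_swap_mul_lt_iff hxi, swap_mul_self_mul]
    lia

lemma sum_absInterval_eq_sum_sum_swap_mul {M : Type*} [AddCommMonoid M] (ρ : Perm α) (x : α)
    (g : Perm α → M) :
    ∑ τ ∈ absInterval ρ, g τ =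
      ∑ π ∈ absInterval ρ with (ρ * π⁻¹) x = x, ∑ i with π.SameCycle x i, g (swap x i * π) := by
  rw [Finset.sum_sigma']
  refine Finset.sum_bij'
    (fun τ _ ↦ ⟨swap x ((ρ * τ⁻¹).symm x) * τ, (ρ * τ⁻¹).symm x⟩) (fun q _ ↦ swap x q.2 * q.1)
    ?_ ?_ ?_ ?_ ?_
  · intro τ hτ
    obtain ⟨hmem, hcycle⟩ :=
      swap_mul_mem_absInterval_of_apply_eq hτ (apply_symm_apply (ρ * τ⁻¹) x)
    simp only [Finset.mem_sigma, Finset.mem_filter, Finset.mem_univ, true_and]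
    refine ⟨⟨hmem, ?_⟩, hcycle⟩
    rw [mul_inv_swap_mul, Perm.mul_apply, swap_apply_left, apply_symm_apply]
  · rintro ⟨π, i⟩ hq
    simp only [Finset.mem_sigma, Finset.mem_filter, Finset.mem_univ, true_and] at hq
    exact swap_mul_mem_absInterval hq.1.1 hq.1.2 hq.2
  · exact fun τ _ ↦ swap_mul_self_mul ..
  · rintro ⟨π, i⟩ hq
    simp only [Finset.mem_sigma, Finset.mem_filter, Finset.mem_univ, true_and] at hq
    have hi : (ρ * (swap x i * π)⁻¹).symm x = i := by
      rw [symm_apply_eq, mul_inv_swap_mul, Perm.mul_apply, swap_apply_right, hq.1.2]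
    simp only [hi, swap_mul_self_mul]
  · exact fun τ _ ↦ by rw [swap_mul_self_mul]

lemma sum_Mob_absInterval (ρ : Perm α) :
    ∑ τ ∈ absInterval ρ, Mob τ = if ρ = 1 then 1 else 0 := by
  split_ifs with hρ
  · rw [hρ, absInterval_one, Finset.sum_singleton, Mob_one]
  · obtain ⟨x, hx⟩ := DFunLike.exists_ne hρ
    rw [sum_absInterval_eq_sum_sum_swap_mul ρ x]
    refine Finset.sum_eq_zero fun π hπ ↦ sum_Mob_swap_mul_eq_zero fun hπx ↦ hx ?_
    have hfix : (ρ * π⁻¹) (π x) = π x := by rw [hπx, (Finset.mem_filter.mp hπ).2]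
    rwa [← Perm.mul_apply, inv_mul_cancel_right, hπx] at hfix

/-- The zeta operator of the absolute order, `v ↦ (ρ ↦ ∑ τ ≤ ρ, v τ)`. -/
def absZeta (α : Type*) [Fintype α] [DecidableEq α] :
    (Perm α → ℝ) →ₗ[ℝ] (Perm α → ℝ) :=
  LinearMap.pi fun ρ ↦ ∑ τ ∈ absInterval ρ, LinearMap.proj τ

lemma absZeta_apply (v : Perm α → ℝ) (ρ : Perm α) :
    absZeta α v ρ = ∑ τ ∈ absInterval ρ, v τ := by
  simp [absZeta]

lemma ker_absZeta : LinearMap.ker (absZeta α) = ⊥ := by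
  refine LinearMap.ker_eq_bot'.mpr fun v hv ↦ funext fun ρ ↦ ?_
  induction hn : permLength ρ using Nat.strong_induction_on generalizing ρ with
  | _ n ih =>
    have hρ : ∑ τ ∈ absInterval ρ, v τ = 0 := by rw [← absZeta_apply, hv, Pi.zero_apply]
    rwa [Finset.sum_eq_single_of_mem ρ (self_mem_absInterval ρ) fun τ hτ hne ↦
      ih _ (hn ▸ permLength_lt_of_mem_absInterval hτ hne) τ rfl] at hρ

end Mobius

lemma tendsto_inv_sq_of_tendsto_cobounded {ι 𝕜 : Type*} [NormedField 𝕜] {l : Filter ι} {t : ι → 𝕜}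
    (ht : Tendsto t l (Bornology.cobounded 𝕜)) :
    Tendsto (fun i ↦ (t i ^ 2)⁻¹) l (nhds 0) := by
  simpa using (tendsto_inv₀_cobounded.comp ht).pow 2

lemma isBigO_sub_of_ker_eq_bot {ι 𝕜 E F : Type*} [NontriviallyNormedField 𝕜] [CompleteSpace 𝕜]
    [NormedAddCommGroup E] [NormedSpace 𝕜 E] [FiniteDimensional 𝕜 E]
    [NormedAddCommGroup F] [NormedSpace 𝕜 F] {l : Filter ι}
    {A : E →ₗ[𝕜] F} (hA : LinearMap.ker A = ⊥) {u : ι → E} {v : E} {ε : ι → 𝕜}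
    (hε : Tendsto ε l (nhds 0)) (h : (fun i ↦ A (u i) - A v) =O[l] fun i ↦ ε i • u i) :
    (fun i ↦ u i - v) =O[l] ε := by
  obtain ⟨K, -, hK⟩ := A.exists_antilipschitzWith hA
  have hpreimage : (fun i ↦ u i - v) =O[l] fun i ↦ A (u i) - A v :=
    .of_bound K <| .of_forall fun i ↦ by simpa only [dist_eq_norm] using hK.le_mul_dist (u i) v
  have hsmul : (fun i ↦ u i - v) =O[l] fun i ↦ ε i • u i := hpreimage.trans h
  have hequiv : (fun _ ↦ v) ~[l] u := by
    have hlittle : (fun i ↦ ε i • u i) =o[l] fun i ↦ (1 : 𝕜) • u i :=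
      ((isLittleO_one_iff 𝕜).mpr hε).smul_isBigO (isBigO_refl u l)
    simp only [one_smul] at hlittle
    exact (hsmul.trans_isLittleO hlittle).symm
  have hbounded : u =O[l] fun _ ↦ (1 : 𝕜) :=
    hequiv.isBigO_symm.trans (isBigO_const_const v one_ne_zero l)
  simpa only [smul_eq_mul, mul_one] using hsmul.trans ((isBigO_refl ε l).smul hbounded)

section Weingarten

open Equiv Equiv.Perm

variable {α : Type*} [Fintype α] [DecidableEq α]

/-- `W` is a Weingarten function on `Perm α` with parameter `t`: the convolution inverse of
`σ ↦ t ^ #σ`. -/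
def IsWeingarten (t : ℝ) (W : Perm α → ℝ) : Prop :=
  ∀ ρ : Perm α, ∑ τ : Perm α, W τ * t ^ ncycles (ρ * τ⁻¹) = if ρ = 1 then 1 else 0

/-- The excess `|τ| + |ρ * τ⁻¹| - |ρ|` over the geodesic distance of the path from `1` to `ρ`
through `τ`. The truncated subtraction is a true one by the triangle inequality. -/
def geodesicDefect (ρ τ : Perm α) : ℕ := permLength τ + permLength (ρ * τ⁻¹) - permLength ρ

lemma permLength_add_geodesicDefect (ρ τ : Perm α) :
    permLength ρ + geodesicDefect ρ τ = permLength τ + permLength (ρ * τ⁻¹) := by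
  refine Nat.add_sub_cancel' ?_
  simpa [add_comm] using permLength_mul_le (ρ * τ⁻¹) τ

lemma mem_absInterval_iff_geodesicDefect_eq_zero {ρ τ : Perm α} :
    τ ∈ absInterval ρ ↔ geodesicDefect ρ τ = 0 := by
  have hdefect := permLength_add_geodesicDefect ρ τ
  rw [mem_absInterval]
  lia

lemma even_geodesicDefect (ρ τ : Perm α) : Even (geodesicDefect ρ τ) := by
  have hparity := even_permLength_mul_add (ρ * τ⁻¹) τ
  rw [inv_mul_cancel_right, add_comm (permLength (ρ * τ⁻¹)), ← permLength_add_geodesicDefect,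
    ← add_assoc] at hparity
  exact (Nat.even_add.mp hparity).mp (Even.add_self _)

lemma abs_indicator_sub_inv_pow_geodesicDefect_le {t : ℝ} (ht : 1 ≤ |t|) (ρ τ : Perm α) :
    |(if τ ∈ absInterval ρ then 1 else 0) - t⁻¹ ^ geodesicDefect ρ τ| ≤ |(t ^ 2)⁻¹| := by
  simp only [mem_absInterval_iff_geodesicDefect_eq_zero]
  split_ifs with h
  · simp [h, sq_nonneg]
  · have htwo : 2 ≤ geodesicDefect ρ τ := by
      obtain ⟨m, hm⟩ := even_geodesicDefect ρ τ
      lia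
    rw [zero_sub, abs_neg, ← inv_pow, abs_pow, abs_pow]
    exact pow_le_pow_of_le_one (abs_nonneg _) (abs_inv t ▸ inv_le_one_of_one_le₀ ht) htwo

/-- The Weingarten function normalised to order one, `σ ↦ t ^ (p + |σ|) * W σ` for `p` letters. -/
def scaledWeingarten (t : ℝ) (W : Perm α → ℝ) (σ : Perm α) : ℝ :=
  t ^ (Fintype.card α + permLength σ) * W σ

lemma sum_inv_pow_geodesicDefect_mul_scaledWeingarten {t : ℝ} (ht : t ≠ 0) {W : Perm α → ℝ}
    (hW : IsWeingarten t W) (ρ : Perm α) :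
    ∑ τ, t⁻¹ ^ geodesicDefect ρ τ * scaledWeingarten t W τ = if ρ = 1 then 1 else 0 := by
  have hterm (τ : Perm α) : t⁻¹ ^ geodesicDefect ρ τ * scaledWeingarten t W τ =
      t ^ permLength ρ * (W τ * t ^ ncycles (ρ * τ⁻¹)) := by
    have hexp : Fintype.card α + permLength τ =
        geodesicDefect ρ τ + (permLength ρ + ncycles (ρ * τ⁻¹)) := by
      have hdefect := permLength_add_geodesicDefect ρ τ
      have hcycles := ncycles_add_permLength (ρ * τ⁻¹)
      lia
    rw [scaledWeingarten, hexp, pow_add, inv_pow, mul_assoc,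
      inv_mul_cancel_left₀ (pow_ne_zero _ ht), pow_add]
    ring
  rw [Finset.sum_congr rfl fun τ _ ↦ hterm τ, ← Finset.mul_sum, hW]
  split_ifs with hρ
  · rw [hρ, permLength_one, pow_zero, one_mul]
  · rw [mul_zero]

lemma absZeta_scaledWeingarten_sub_absZeta_Mob {t : ℝ} (ht : t ≠ 0) {W : Perm α → ℝ}
    (hW : IsWeingarten t W) (ρ : Perm α) :
    (absZeta α (scaledWeingarten t W) - absZeta α Mob) ρ =
      ∑ τ, ((if τ ∈ absInterval ρ then 1 else 0) - t⁻¹ ^ geodesicDefect ρ τ) *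
        scaledWeingarten t W τ := by
  simp only [sub_mul, Finset.sum_sub_distrib,
    sum_inv_pow_geodesicDefect_mul_scaledWeingarten ht hW, Pi.sub_apply, absZeta_apply,
    sum_Mob_absInterval, ite_mul, one_mul, zero_mul, Finset.sum_ite_mem, Finset.univ_inter]

lemma norm_absZeta_scaledWeingarten_sub_le {t : ℝ} (ht : 1 ≤ |t|) {W : Perm α → ℝ}
    (hW : IsWeingarten t W) :
    ‖absZeta α (scaledWeingarten t W) - absZeta α Mob‖ ≤
      Fintype.card (Perm α) * ‖(t ^ 2)⁻¹ • scaledWeingarten t W‖ := by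
  refine (pi_norm_le_iff_of_nonneg (by positivity)).mpr fun ρ ↦ ?_
  have ht₀ : t ≠ 0 := abs_pos.mp (zero_lt_one.trans_le ht)
  rw [absZeta_scaledWeingarten_sub_absZeta_Mob ht₀ hW, ← nsmul_eq_mul, ← Finset.card_univ]
  refine norm_sum_le_of_le _ (fun τ _ ↦ ?_) |>.trans_eq (Finset.sum_const _)
  rw [norm_mul, norm_smul]
  exact mul_le_mul (abs_indicator_sub_inv_pow_geodesicDefect_le ht ρ τ) (norm_le_pi_norm _ τ)
    (norm_nonneg _) (norm_nonneg _)

variable {ι : Type*} {l : Filter ι} {t : ι → ℝ} {W : ι → Perm α → ℝ}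

lemma isBigO_scaledWeingarten_sub_Mob (ht : Tendsto t l (Bornology.cobounded ℝ))
    (hW : ∀ᶠ i in l, IsWeingarten (t i) (W i)) :
    (fun i ↦ scaledWeingarten (t i) (W i) - Mob) =O[l] fun i ↦ (t i ^ 2)⁻¹ := by
  refine isBigO_sub_of_ker_eq_bot ker_absZeta (tendsto_inv_sq_of_tendsto_cobounded ht)
    (.of_bound (Fintype.card (Perm α)) ?_)
  filter_upwards [hW, (tendsto_norm_cobounded_atTop.comp ht).eventually_ge_atTop 1] with i hWi hti
  exact norm_absZeta_scaledWeingarten_sub_le hti hWi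

theorem weingarten_asymptotics_general (ht : Tendsto t l (Bornology.cobounded ℝ))
    (hW : ∀ᶠ i in l, IsWeingarten (t i) (W i)) (σ : Perm α) :
    Tendsto (fun i ↦ t i ^ (Fintype.card α + permLength σ) * W i σ) l (nhds (Mob σ)) ∧
      (fun i ↦ t i ^ (Fintype.card α + permLength σ) * W i σ - Mob σ) =O[l]
        fun i ↦ (t i ^ 2)⁻¹ := by
  have hO := isBigO_pi.mp (isBigO_scaledWeingarten_sub_Mob ht hW) σ
  refine ⟨?_, hO⟩
  exact tendsto_sub_nhds_zero_iff.mp (hO.trans_tendsto (tendsto_inv_sq_of_tendsto_cobounded ht))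

end Weingarten

/-- **First-order asymptotics of the Weingarten function.** For a fixed `p ≥ 1` and
`σ ∈ S_p`, with `Wg(n,·)` the Weingarten function (convolution inverse of `σ ↦ n^{#σ}`
for `n ≥ p`), one has `n^{p+|σ|} Wg(n,σ) → Mob(σ)`; in particular
`n^{p+|σ|} Wg(n,σ) − Mob(σ) = O(n^{−2})`. -/
theorem weingarten_asymptotics (p : ℕ) (hp : 1 ≤ p) (σ : Equiv.Perm (Fin p))
    (Wg : ℕ → Equiv.Perm (Fin p) → ℝ)
    (hWg : ∀ n, p ≤ n → ∀ ρ : Equiv.Perm (Fin p),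
      ∑ τ : Equiv.Perm (Fin p), Wg n τ * (n : ℝ) ^ ncycles (ρ * τ⁻¹) =
        if ρ = 1 then 1 else 0) :
    Tendsto (fun n : ℕ => (n : ℝ) ^ (p + permLength σ) * Wg n σ) atTop (nhds (Mob σ)) ∧
      (fun n : ℕ => (n : ℝ) ^ (p + permLength σ) * Wg n σ - Mob σ) =O[atTop]
        fun n : ℕ => ((n : ℝ) ^ 2)⁻¹ := by
  simpa only [Fintype.card_fin] using weingarten_asymptotics_general
    tendsto_natCast_atTop_cobounded (eventually_atTop.mpr ⟨p, hWg⟩) σ
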